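/- Let k and m be non-negative integers with m ≤ k+1, let G be a connected K_{1,4}-free finite simple graph having no spanning tree T' with |L(T')| + |B(T')| ≤ m+k+2, and let T be a spanning tree of G chosen so that (C1) |L(T)| is minimum among all spanning trees of G and (C2) |V(R_Stem(T))| is maximum subject to (C1). Then there exists an independent set S of G with |S| = m+2 such that at least k distinct edges of T each have no oblique neighbor in S with respect to T. -/

import Mathlib

open SimpleGraph Finset List

open scoped Classical

variable {V : Type*}

/-- `G` contains no induced copy of `K_{1,4}` (a star with four edges). -/
def K14Free (G : SimpleGraph V) : Prop :=
  ¬ ∃ c a b d e : V, a ≠ b ∧ a ≠ d ∧ a ≠ e ∧ b ≠ d ∧ b ≠ e ∧ d ≠ e ∧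
    G.Adj c a ∧ G.Adj c b ∧ G.Adj c d ∧ G.Adj c e ∧
    ¬G.Adj a b ∧ ¬G.Adj a d ∧ ¬G.Adj a e ∧ ¬G.Adj b d ∧ ¬G.Adj b e ∧ ¬G.Adj d e

/-- `s` is an independent set of vertices of `G`. -/
def IsIndepFinset (G : SimpleGraph V) (s : Finset V) : Prop :=
  ∀ u ∈ s, ∀ v ∈ s, u ≠ v → ¬G.Adj u v

/-- The set `L(T)` of leaves (vertices of degree one) of `T`. -/
noncomputable def leafSet [Fintype V] (T : SimpleGraph V) : Finset V :=
  Finset.univ.filter fun v => T.degree v = 1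

/-- The set `B(T)` of branch vertices (vertices of degree at least three) of `T`. -/
noncomputable def branchSet [Fintype V] (T : SimpleGraph V) : Finset V :=
  Finset.univ.filter fun v => 3 ≤ T.degree v

/-- `v` is an oblique neighbor of the edge `e` with respect to the (spanning) tree `T` of `G`:
`e = s(a,b)` where `b` is the endpoint of `e` farthest from `v` in `T`, and `v b ∈ E(G)`. -/
def IsObliqueNbr (G T : SimpleGraph V) (e : Sym2 V) (v : V) : Prop :=
  ∃ a b : V, e = s(a, b) ∧ T.dist v a < T.dist v b ∧ G.Adj v b

/-- The number of vertices of the reducible stem `R_Stem(T)` of `T`: a vertex `v` survives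
iff for every leaf `x` of `T` the (unique) path of `T` from `x` to `v` contains a branch
vertex (so exactly the vertices not lying strictly before the first branch vertex on the
path leaving some leaf). -/
noncomputable def rstemCard [Fintype V] (T : SimpleGraph V) : ℕ :=
  {v : V | ∀ x : V, T.degree x = 1 → ∀ p : T.Walk x v, p.IsPath →
    ∃ w ∈ p.support, 3 ≤ T.degree w}.ncard

/-!
The set `S` is chosen among the leaves of `T`. Two leaves are never adjacent in `G`: such an edge
could be exchanged for an edge of `T` at a branch vertex, giving a spanning tree with fewer leaves.
For the same reason the pendant edge at a leaf outside `S` has no oblique neighbor in `S`.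

Let `b` and `b'` be branch vertices joined by a path of `T` without further branch vertices. If both
end edges of this path had leaves as oblique neighbors, then a leaf beyond `b'` would be adjacent
to `b` and a leaf beyond `b` adjacent to `b'`. By (C1), (C2) and the absence of an induced
`K_{1,4}`, any two neighbors of `b` off the path would then be adjacent, and exchanging three edges
would again save a leaf.

Hence deleting the edges without oblique neighbors in `S` separates all vertices of
`B(T) ∪ (L(T) \ S)` from each other, so there are at least `|L(T)| + |B(T)| - |S| - 1` of them.
Enough leaves are available because `|L(T)| = 2 + ∑ (deg v - 2) ≥ 2 + |B(T)|`, the sum being over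
the vertices of degree at least two.
-/

/-! ### Distances in graphs and trees -/

section Dist

variable {G T : SimpleGraph V} {a b c p u v w x y : V}

theorem exists_adj_dist_eq_add_one (hG : G.Connected) (hxb : x ≠ b) :
    ∃ c, G.Adj b c ∧ G.dist x b = G.dist x c + 1 := by
  obtain ⟨p, hp⟩ := hG.exists_walk_length_eq_dist b x
  cases p with
  | nil => exact absurd rfl hxb
  | @cons _ c _ hbc q =>
    have hcx : G.dist c x ≤ q.length := dist_le q
    have htri : G.dist x b ≤ G.dist x c + G.dist c b := hG.dist_triangle
    rw [dist_eq_one_iff_adj.mpr hbc.symm] at htri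
    rw [Walk.length_cons, dist_comm] at hp
    rw [dist_comm] at hcx
    exact ⟨c, hbc, by omega⟩

theorem ne_of_dist_eq_add_one (hG : G.Connected) (hw : G.dist b w + G.dist x w = G.dist x b)
    (hy : G.dist b w = G.dist b y + 1) (hz : G.dist x w = G.dist x p + 1) : y ≠ p := by
  rintro rfl
  have htri : G.dist x b ≤ G.dist x y + G.dist y b := hG.dist_triangle
  rw [dist_comm (u := y)] at htri
  omega

theorem dist_add_dist_eq_of_mem_support {q : G.Walk x c} (hq : q.length = G.dist x c)
    (hy : y ∈ q.support) : G.dist x y + G.dist y c = G.dist x c := by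
  have hlen : (q.takeUntil y hy).length + (q.dropUntil y hy).length = q.length := by
    rw [← Walk.length_append, q.take_spec hy]
  have hxy := dist_le (q.takeUntil y hy)
  have hyc := dist_le (q.dropUntil y hy)
  have htri := (q.takeUntil y hy).reachable.dist_triangle_left (w := c)
  omega

theorem reachable_deleteEdges_of_dist_add_dist_ne {R : Set (Sym2 V)} (hxc : G.Reachable x c)
    (hR : ∀ e ∈ R, ∃ y ∈ e, G.dist x y + G.dist y c ≠ G.dist x c) :
    (G.deleteEdges R).Reachable x c := by
  obtain ⟨q, hq⟩ := hxc.exists_walk_length_eq_dist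
  refine ⟨q.toDeleteEdges R fun e he heR => ?_⟩
  obtain ⟨y, hye, hy⟩ := hR e heR
  exact hy (dist_add_dist_eq_of_mem_support hq (q.mem_support_of_mem_edges he hye))

theorem eq_of_adj_of_dist_lt (hT : T.IsTree) (hbc : T.Adj b c) (hbp : T.Adj b p)
    (hc : T.dist x c < T.dist x b) (hp : T.dist x p < T.dist x b) : c = p := by
  have isPath_cons {z : V} (hbz : T.Adj b z) (hz : T.dist x z < T.dist x b) :
      ∃ q : T.Walk z x, (Walk.cons hbz q).IsPath := by
    obtain ⟨q, hq⟩ := hT.connected.exists_walk_length_eq_dist z x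
    refine ⟨q, Walk.isPath_of_length_eq_dist _ ?_⟩
    rw [Walk.length_cons, hq, dist_comm, dist_comm (u := b)]
    have := hT.dist_eq_dist_add_one_of_adj x hbz
    omega
  obtain ⟨q, hq⟩ := isPath_cons hbc hc
  obtain ⟨r, hr⟩ := isPath_cons hbp hp
  have := (hT.existsUnique_path b x).unique hq hr
  rw [Walk.cons.injEq] at this
  exact this.1

theorem dist_eq_add_one_of_adj_of_ne (hT : T.IsTree) (hbp : T.Adj b p)
    (hp : T.dist x p < T.dist x b) (hbc : T.Adj b c) (hcp : c ≠ p) :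
    T.dist x c = T.dist x b + 1 :=
  (hT.dist_eq_dist_add_one_of_adj x hbc).resolve_left fun h =>
    hcp (eq_of_adj_of_dist_lt hT hbc hbp (by omega) hp)

theorem mem_support_of_dist_add_dist_eq (hT : T.IsTree) {q : T.Walk x c} (hq : q.IsPath)
    (hy : T.dist x y + T.dist y c = T.dist x c) : y ∈ q.support := by
  obtain ⟨q₁, hq₁⟩ := hT.connected.exists_walk_length_eq_dist x y
  obtain ⟨q₂, hq₂⟩ := hT.connected.exists_walk_length_eq_dist y c
  have hpath : (q₁.append q₂).IsPath :=
    Walk.isPath_of_length_eq_dist _ (by rw [Walk.length_append, hq₁, hq₂, hy])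
  rw [(hT.existsUnique_path x c).unique hq hpath, Walk.mem_support_append_iff]
  exact Or.inl q₁.end_mem_support

theorem not_reachable_deleteEdges_of_dist_add_dist_lt (hT : T.IsTree) {F : Set (Sym2 V)}
    (hxy : T.Adj x y) (hF : s(x, y) ∈ F) (h : T.dist u x + T.dist w y < T.dist u w) :
    ¬(T.deleteEdges F).Reachable u w := by
  intro huw
  have huy : T.dist u w ≤ T.dist u y + T.dist y w := hT.connected.dist_triangle
  have hxw : T.dist u w ≤ T.dist u x + T.dist x w := hT.connected.dist_triangle
  rw [dist_comm (u := y)] at huy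
  rw [dist_comm (u := x)] at hxw
  have hux : (T.deleteEdges {s(x, y)}).Reachable u x :=
    reachable_deleteEdges_of_dist_add_dist_ne (hT.connected u x) fun e he =>
      ⟨y, he ▸ Sym2.mem_mk_right x y, by omega⟩
  have hwy : (T.deleteEdges {s(x, y)}).Reachable w y :=
    reachable_deleteEdges_of_dist_add_dist_ne (hT.connected w y) fun e he =>
      ⟨x, he ▸ Sym2.mem_mk_left x y, by omega⟩
  have hbridge : ¬(T.deleteEdges {s(x, y)}).Reachable x y :=
    isBridge_iff.mp (isAcyclic_iff_forall_adj_isBridge.mp hT.isAcyclic hxy)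
  exact hbridge (hux.symm.trans ((huw.mono
    (deleteEdges_anti (Set.singleton_subset_iff.mpr hF))).trans hwy))

end Dist

section Degree

variable [Fintype V] {G T : SimpleGraph V} {b b' c d p v x y : V}

theorem exists_adj_notMem_of_card_lt_degree {s : Finset V} (h : #s < G.degree b) :
    ∃ c, G.Adj b c ∧ c ∉ s := by
  obtain ⟨c, hc, hcs⟩ := Finset.exists_mem_notMem_of_card_lt_card h
  exact ⟨c, (G.mem_neighborFinset b c).mp hc, hcs⟩

theorem eq_of_adj_of_degree_eq_one (hv : G.degree v = 1) (hx : G.Adj v x) (hy : G.Adj v y) :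
    x = y :=
  (G.degree_eq_one_iff_existsUnique_adj.mp hv).unique hx hy

theorem three_le_degree_of_adj (hc : G.Adj b c) (hd : G.Adj b d) (hp : G.Adj b p)
    (hcd : c ≠ d) (hcp : c ≠ p) (hdp : d ≠ p) : 3 ≤ G.degree b :=
  Finset.two_lt_card_iff.mpr ⟨c, d, p, by simpa using ⟨hc, hd, hp, hcd, hcp, hdp⟩⟩

theorem exists_three_le_degree_between (hT : T.IsTree) (hbp : T.Adj b p)
    (hb' : 3 ≤ T.degree b') (hpb' : T.dist b' p < T.dist b' b)
    (hv : T.degree v = 1) (hpv : T.dist v p < T.dist v b) :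
    ∃ w, w ≠ b ∧ 3 ≤ T.degree w ∧ T.dist b w + T.dist b' w = T.dist b' b ∧
      T.dist b w + T.dist v w = T.dist v b := by
  let I : Finset V := {w | T.dist b w + T.dist b' w = T.dist b' b ∧
    T.dist b w + T.dist v w = T.dist v b}
  have mem_I {w : V} : w ∈ I ↔ T.dist b w + T.dist b' w = T.dist b' b ∧
      T.dist b w + T.dist v w = T.dist v b := by simp [I]
  have hbp1 : T.dist b p = 1 := dist_eq_one_iff_adj.mpr hbp
  have hpI : p ∈ I := by
    have := hT.dist_eq_dist_add_one_of_adj b' hbp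
    have := hT.dist_eq_dist_add_one_of_adj v hbp
    exact mem_I.mpr ⟨by omega, by omega⟩
  -- The last common vertex of the paths from `b` to `b'` and to `v` is a branch vertex.
  obtain ⟨w, hwI, hmax⟩ := I.exists_max_image (T.dist b) ⟨p, hpI⟩
  obtain ⟨hwb', hwv⟩ := mem_I.mp hwI
  have hwb : w ≠ b := by
    rintro rfl
    have := hmax p hpI
    simp [hbp1] at this
  refine ⟨w, hwb, ?_, hwb', hwv⟩
  obtain rfl | hne := eq_or_ne b' w
  · exact hb'
  obtain ⟨x, hwx, hx⟩ := exists_adj_dist_eq_add_one hT.connected hwb.symm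
  obtain ⟨y, hwy, hy⟩ := exists_adj_dist_eq_add_one hT.connected hne
  have hxy : x ≠ y := ne_of_dist_eq_add_one hT.connected hwb' hx hy
  have hvw : v ≠ w := by
    rintro rfl
    exact hxy (eq_of_adj_of_degree_eq_one hv hwx hwy)
  obtain ⟨z, hwz, hz⟩ := exists_adj_dist_eq_add_one hT.connected hvw
  have hxz : x ≠ z := ne_of_dist_eq_add_one hT.connected hwv hx hz
  have hyz : y ≠ z := by
    rintro rfl
    have hby := dist_eq_add_one_of_adj_of_ne (x := b) hT hwx (by omega) hwy hxy.symm
    have := hmax y (mem_I.mpr ⟨by omega, by omega⟩)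
    omega
  exact three_le_degree_of_adj hwx hwy hwz hxy hxz hyz

end Degree

/-! ### Exchanging edges of a tree -/

section EdgeExchange

variable {G T : SimpleGraph V} {R A : Finset (Sym2 V)} {x y : V}

/-- The graph obtained from `T` by deleting the edges in `R` and adding those in `A`, that is
`T - R + A`. Loops in `A` are ignored. -/
def edgeExchange (T : SimpleGraph V) (R A : Finset (Sym2 V)) : SimpleGraph V :=
  T.deleteEdges R ⊔ fromEdgeSet A

theorem edgeExchange_adj :
    (edgeExchange T R A).Adj x y ↔ T.Adj x y ∧ s(x, y) ∉ R ∨ s(x, y) ∈ A ∧ x ≠ y := by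
  simp [edgeExchange]

theorem edgeExchange_le (hTG : T ≤ G) (hA : ∀ e ∈ A, e ∈ G.edgeSet) : edgeExchange T R A ≤ G := by
  intro x y h
  obtain ⟨h, -⟩ | ⟨h, -⟩ := edgeExchange_adj.mp h
  exacts [hTG h, hA _ h]

theorem reachable_edgeExchange_of_dist_add_dist_ne (hT : T.Connected) (x y : V)
    (hR : ∀ e ∈ R, ∃ z ∈ e, T.dist x z + T.dist z y ≠ T.dist x y) :
    (edgeExchange T R A).Reachable x y :=
  (reachable_deleteEdges_of_dist_add_dist_ne (hT x y) hR).mono le_sup_left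

theorem connected_edgeExchange (hT : T.Connected)
    (hR : ∀ e ∈ R, ∃ x y, e = s(x, y) ∧ (edgeExchange T R A).Reachable x y) :
    (edgeExchange T R A).Connected := by
  have := hT.nonempty
  refine Connected.mk fun x y => ?_
  obtain ⟨q⟩ := hT x y
  induction q with
  | nil => exact Reachable.refl _
  | @cons a b _ hab _ ih =>
    refine Reachable.trans ?_ ih
    by_cases h : s(a, b) ∈ R
    · obtain ⟨c, d, he, hcd⟩ := hR _ h
      obtain ⟨rfl, rfl⟩ | ⟨rfl, rfl⟩ := Sym2.eq_iff.mp he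
      exacts [hcd, hcd.symm]
    · exact (edgeExchange_adj.mpr (Or.inl ⟨hab, h⟩)).reachable

variable [Fintype V]

theorem edgeFinset_edgeExchange_subset :
    (edgeExchange T R A).edgeFinset ⊆ T.edgeFinset \ R ∪ A := by
  intro e
  induction e with
  | _ x y =>
    rw [mem_edgeFinset, mem_edgeSet, edgeExchange_adj, Finset.mem_union, Finset.mem_sdiff,
      mem_edgeFinset, mem_edgeSet]
    tauto

theorem isTree_edgeExchange (hT : T.IsTree) (hRT : R ⊆ T.edgeFinset) (hAR : #A ≤ #R)
    (hR : ∀ e ∈ R, ∃ x y, e = s(x, y) ∧ (edgeExchange T R A).Reachable x y) :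
    (edgeExchange T R A).IsTree := by
  have hconn := connected_edgeExchange hT.connected hR
  refine isTree_iff_connected_and_card.mpr
    ⟨hconn, le_antisymm ?_ hconn.card_vert_le_card_edgeSet_add_one⟩
  have hcard : #(edgeExchange T R A).edgeFinset ≤ #(T.edgeFinset \ R) + #A :=
    (Finset.card_le_card edgeFinset_edgeExchange_subset).trans (Finset.card_union_le _ _)
  have hsdiff := Finset.card_sdiff_add_card_eq_card hRT
  have hTcard := hT.card_edgeFinset
  rw [Nat.card_eq_fintype_card, Nat.card_eq_fintype_card, ← edgeFinset_card]
  omega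

theorem degree_edgeExchange_add_le (hRT : R ⊆ T.edgeFinset) (x : V) :
    (edgeExchange T R A).degree x + #{e ∈ R | x ∈ e} ≤ T.degree x + #{e ∈ A | x ∈ e} := by
  rw [← card_incidenceFinset_eq_degree, ← card_incidenceFinset_eq_degree,
    incidenceFinset_eq_filter, incidenceFinset_eq_filter,
    ← Finset.card_sdiff_add_card_eq_card (Finset.filter_subset_filter (x ∈ ·) hRT)]
  have hsub : {e ∈ (edgeExchange T R A).edgeFinset | x ∈ e} ⊆
      ({e ∈ T.edgeFinset | x ∈ e} \ {e ∈ R | x ∈ e}) ∪ {e ∈ A | x ∈ e} := by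
    intro e he
    obtain ⟨he, hx⟩ := Finset.mem_filter.mp he
    have := edgeFinset_edgeExchange_subset he
    simp only [Finset.mem_union, Finset.mem_sdiff, Finset.mem_filter] at this ⊢
    tauto
  have := (Finset.card_le_card hsub).trans (Finset.card_union_le _ _)
  omega

end EdgeExchange

section Excess

variable [Fintype V] {T : SimpleGraph V}

theorem card_leafSet_eq_two_add_sum [Nontrivial V] (hT : T.IsTree) :
    #(leafSet T) = 2 + ∑ v, (T.degree v - 2) := by
  have hpos (v : V) : 0 < T.degree v := hT.connected.preconnected.degree_pos_of_nontrivial v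
  have hsum : ∑ v, (T.degree v + if T.degree v = 1 then 1 else 0) =
      ∑ v, (2 + (T.degree v - 2)) :=
    Finset.sum_congr rfl fun v _ => by have := hpos v; split_ifs <;> omega
  rw [Finset.sum_add_distrib, Finset.sum_add_distrib, T.sum_degrees_eq_twice_card_edges,
    ← Finset.card_filter, Finset.sum_const, smul_eq_mul, Finset.card_univ] at hsum
  have := hT.card_edgeFinset
  rw [leafSet]
  omega

theorem card_branchSet_le_sum : #(branchSet T) ≤ ∑ v, (T.degree v - 2) := by
  rw [branchSet, Finset.card_filter]
  exact Finset.sum_le_sum fun v _ => by split_ifs <;> omega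

theorem exists_three_le_degree_of_two_lt_card_leafSet [Nontrivial V] (hT : T.IsTree)
    (h : 2 < #(leafSet T)) : ∃ b, 3 ≤ T.degree b := by
  rw [card_leafSet_eq_two_add_sum hT] at h
  obtain ⟨b, -, hb⟩ := Finset.exists_ne_zero_of_sum_ne_zero (by omega : ∑ v, (T.degree v - 2) ≠ 0)
  exact ⟨b, by omega⟩

end Excess

section MinLeaf

/-- Condition (C1): `T` is a spanning tree of `G` with the fewest leaves. -/
structure IsMinLeafSpanningTree [Fintype V] (G T : SimpleGraph V) : Prop where
  le : T ≤ G
  isTree : T.IsTree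
  card_leafSet_le : ∀ T' ≤ G, T'.IsTree → #(leafSet T) ≤ #(leafSet T')

/-- The edges in `R` of the tree `T` can be replaced by the edges in `A` of `G` so that the result
is again a spanning tree, and no vertex gains edges unless it ends up with degree at most two.
The number of leaves does not increase under such an exchange. -/
structure IsAdmissibleExchange [Fintype V] (G T : SimpleGraph V) (R A : Finset (Sym2 V)) :
    Prop where
  subset_edgeFinset : R ⊆ T.edgeFinset
  mem_edgeSet : ∀ e ∈ A, e ∈ G.edgeSet
  card_le : #A ≤ #R
  reachable : ∀ e ∈ R, ∃ x y, e = s(x, y) ∧ (edgeExchange T R A).Reachable x y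
  degree_le : ∀ x, #{e ∈ A | x ∈ e} ≤ #{e ∈ R | x ∈ e} ∨
    T.degree x + #{e ∈ A | x ∈ e} ≤ #{e ∈ R | x ∈ e} + 2

variable [Fintype V] {G T : SimpleGraph V} {R A : Finset (Sym2 V)} {b c p u v x : V}

namespace IsAdmissibleExchange

theorem isTree (h : IsAdmissibleExchange G T R A) (hT : T.IsTree) : (edgeExchange T R A).IsTree :=
  isTree_edgeExchange hT h.subset_edgeFinset h.card_le h.reachable

theorem degree_sub_two_le (h : IsAdmissibleExchange G T R A) (x : V) :
    (edgeExchange T R A).degree x - 2 ≤ T.degree x - 2 := by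
  have := degree_edgeExchange_add_le (A := A) h.subset_edgeFinset x
  have := h.degree_le x
  omega

theorem degree_sub_two_eq (h : IsAdmissibleExchange G T R A) (hT : IsMinLeafSpanningTree G T)
    (x : V) : (edgeExchange T R A).degree x - 2 = T.degree x - 2 := by
  obtain _ | _ := subsingleton_or_nontrivial V
  · rw [degree_eq_zero_of_subsingleton, degree_eq_zero_of_subsingleton]
  have hT' := h.isTree hT.isTree
  have hleaf := hT.card_leafSet_le _ (edgeExchange_le hT.le h.mem_edgeSet) hT'
  rw [card_leafSet_eq_two_add_sum hT.isTree, card_leafSet_eq_two_add_sum hT',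
    Nat.add_le_add_iff_left] at hleaf
  have hsum := hleaf.antisymm (Finset.sum_le_sum fun v _ => h.degree_sub_two_le v)
  exact (Finset.sum_eq_sum_iff_of_le fun v _ => h.degree_sub_two_le v).mp hsum.symm x
    (Finset.mem_univ x)

theorem card_leafSet_eq [Nontrivial V] (h : IsAdmissibleExchange G T R A)
    (hT : IsMinLeafSpanningTree G T) : #(leafSet (edgeExchange T R A)) = #(leafSet T) := by
  rw [card_leafSet_eq_two_add_sum hT.isTree, card_leafSet_eq_two_add_sum (h.isTree hT.isTree)]
  simp only [h.degree_sub_two_eq hT]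

theorem card_filter_mem_le (h : IsAdmissibleExchange G T R A) (hT : IsMinLeafSpanningTree G T)
    (hb : 3 ≤ T.degree b) : #{e ∈ R | b ∈ e} ≤ #{e ∈ A | b ∈ e} := by
  have := degree_edgeExchange_add_le (A := A) h.subset_edgeFinset b
  have := h.degree_sub_two_eq hT b
  omega

end IsAdmissibleExchange

namespace IsMinLeafSpanningTree

theorem not_adj_of_separated (hT : IsMinLeafSpanningTree G T) (hb : 3 ≤ T.degree b)
    (hbc : T.Adj b c) (hu : T.degree u = 1) (hub : T.dist u b < T.dist u c)
    (hv : v = c ∨ T.degree v = 1) (hvc : T.dist v c < T.dist v b) : ¬G.Adj u v := by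
  intro huv
  have hR : IsAdmissibleExchange G T {s(b, c)} {s(u, v)} := by
    have := hbc.ne
    have := huv.ne
    refine ⟨by simpa using hbc, by simpa using huv, by simp, ?_, fun x => ?_⟩
    · have hbu : (edgeExchange T {s(b, c)} {s(u, v)}).Reachable u b :=
        reachable_edgeExchange_of_dist_add_dist_ne hT.isTree.connected u b fun e he =>
          ⟨c, by simp_all, by omega⟩
      have hcv : (edgeExchange T {s(b, c)} {s(u, v)}).Reachable v c :=
        reachable_edgeExchange_of_dist_add_dist_ne hT.isTree.connected v c fun e he =>
          ⟨b, by simp_all, by omega⟩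
      have hadj : (edgeExchange T {s(b, c)} {s(u, v)}).Adj u v :=
        edgeExchange_adj.mpr (by simp [huv.ne])
      exact fun e he => ⟨b, c, Finset.mem_singleton.mp he,
        hbu.symm.trans (hadj.reachable.trans hcv)⟩
    · simp only [Finset.filter_singleton, Sym2.mem_iff]
      grind
  have hle := hR.card_filter_mem_le hT hb
  have hbu : b ≠ u := by rintro rfl; omega
  have hbv : b ≠ v := by
    rintro rfl
    simp at hvc
  simp [Finset.filter_singleton, hbu, hbv] at hle

/-- If `u v` were an edge, the branch vertex where the path from `u` to `v` leaves the path from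
`u` to `b` would lose an edge in exchange for it. -/
theorem not_adj_of_degree_eq_one (hT : IsMinLeafSpanningTree G T) (hb : 3 ≤ T.degree b)
    (hu : T.degree u = 1) (hv : T.degree v = 1) : ¬G.Adj u v := by
  intro huv
  have hub : b ≠ u := by rintro rfl; omega
  have hne : v ≠ u := huv.ne'
  obtain ⟨q, huq, hq⟩ := exists_adj_dist_eq_add_one hT.isTree.connected hub
  obtain ⟨r, hur, hr⟩ := exists_adj_dist_eq_add_one hT.isTree.connected hne
  obtain rfl := eq_of_adj_of_degree_eq_one hu huq hur
  obtain ⟨w, -, hw, -, hwv⟩ :=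
    exists_three_le_degree_between hT.isTree huq hb (by omega) hv (by omega)
  have hvw : v ≠ w := by rintro rfl; omega
  obtain ⟨c, hwc, hc⟩ := exists_adj_dist_eq_add_one hT.isTree.connected hvw
  refine hT.not_adj_of_separated hw hwc hu ?_ (Or.inr hv) (by omega) huv
  have := hT.isTree.connected.dist_triangle (u := v) (v := c) (w := u)
  have := T.dist_comm (u := u) (v := c)
  omega

theorem not_adj_of_adj_of_dist_lt (hT : IsMinLeafSpanningTree G T) (hb : 3 ≤ T.degree b)
    (hbp : T.Adj b p) (hbc : T.Adj b c) (hcp : c ≠ p) (hv : T.degree v = 1)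
    (hpv : T.dist v p < T.dist v b) (hvb : G.Adj v b) : ¬G.Adj c p := by
  intro hGcp
  have hbp' := hbp.ne
  have hbc' := hbc.ne
  have hvb' := hvb.ne
  have hR : IsAdmissibleExchange G T {s(b, p), s(b, c)} {s(c, p), s(b, v)} := by
    refine ⟨?_, ?_, ?_, ?_, fun x => ?_⟩
    · simp [Finset.insert_subset_iff, hbp, hbc]
    · simp [hGcp, hvb.symm]
    · grind
    · have hvp : (edgeExchange T {s(b, p), s(b, c)} {s(c, p), s(b, v)}).Reachable v p :=
        reachable_edgeExchange_of_dist_add_dist_ne hT.isTree.connected v p fun e he =>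
          ⟨b, by grind, by omega⟩
      have hbv : (edgeExchange T {s(b, p), s(b, c)} {s(c, p), s(b, v)}).Adj b v :=
        edgeExchange_adj.mpr (by simp [hvb'.symm])
      have hpc : (edgeExchange T {s(b, p), s(b, c)} {s(c, p), s(b, v)}).Adj p c :=
        edgeExchange_adj.mpr (by simp [Sym2.eq_swap, hcp.symm])
      have hbp := hbv.reachable.trans hvp
      simpa only [Finset.mem_insert, Finset.mem_singleton, forall_eq_or_imp, forall_eq] using
        ⟨⟨b, p, rfl, hbp⟩, b, c, rfl, hbp.trans hpc.reachable⟩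
    · simp only [Finset.filter_insert, Finset.filter_singleton, Sym2.mem_iff]
      grind
  have hle := hR.card_filter_mem_le hT hb
  simp only [Finset.filter_insert, Finset.filter_singleton, Sym2.mem_iff] at hle
  grind

end IsMinLeafSpanningTree

end MinLeaf

/-! ### The reducible stem -/

section Stem

/-- `IsPendant T v` says that `v` lies before the first branch vertex on the path of `T` from some
leaf, that is, outside the reducible stem of `T`. -/
inductive IsPendant [Fintype V] (T : SimpleGraph V) : V → Prop
  | leaf {v : V} (hv : T.degree v = 1) : IsPendant T v
  | step {v w : V} (hv : IsPendant T v) (hvw : T.Adj v w) (hw : T.degree w < 3) : IsPendant T w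

variable [Fintype V] {T : SimpleGraph V} {b b' p v : V}

namespace IsPendant

theorem degree_lt_three (h : IsPendant T v) : T.degree v < 3 := by
  cases h <;> omega

theorem of_walk {x : V} (hx : IsPendant T x) (q : T.Walk x v)
    (hq : ∀ w ∈ q.support, T.degree w < 3) : IsPendant T v := by
  induction q with
  | nil => exact hx
  | cons hadj q ih =>
    exact ih (hx.step hadj (hq _ (by simp))) fun w hw =>
      hq w (List.mem_cons_of_mem _ hw)

theorem exists_path (h : IsPendant T v) : ∃ x, T.degree x = 1 ∧
    ∃ q : T.Walk x v, q.IsPath ∧ ∀ w ∈ q.support, T.degree w < 3 := by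
  suffices ∃ x, T.degree x = 1 ∧ ∃ q : T.Walk x v, ∀ w ∈ q.support, T.degree w < 3 by
    obtain ⟨x, hx, q, hq⟩ := this
    exact ⟨x, hx, q.bypass, q.bypass_isPath, fun w hw => hq w (q.support_bypass_subset_support hw)⟩
  induction h with
  | @leaf v hv => exact ⟨v, hv, Walk.nil, by simp [hv]⟩
  | step _ hvw hw ih =>
    obtain ⟨x, hx, q, hq⟩ := ih
    refine ⟨x, hx, q.concat hvw, fun y hy => ?_⟩
    rw [Walk.support_concat, List.mem_append, List.mem_singleton] at hy
    obtain hy | rfl := hy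
    exacts [hq y hy, hw]

end IsPendant

theorem rstemCard_eq_ncard_not_isPendant (T : SimpleGraph V) :
    rstemCard T = {v | ¬IsPendant T v}.ncard := by
  rw [rstemCard]
  congr 1
  ext v
  simp only [Set.mem_ofPred_eq]
  constructor
  · intro h hv
    obtain ⟨x, hx, q, hq, hdeg⟩ := hv.exists_path
    obtain ⟨w, hw, hw3⟩ := h x hx q hq
    exact (hdeg w hw).not_ge hw3
  · intro h x hx q _
    by_contra! hdeg
    exact h ((IsPendant.leaf hx).of_walk q hdeg)

theorem not_isPendant_of_dist_lt (hT : T.IsTree) (hb : 3 ≤ T.degree b) (hb' : 3 ≤ T.degree b')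
    (hbp : T.Adj b p) (hpb' : T.dist b' p < T.dist b' b) : ¬IsPendant T p := by
  intro hp
  obtain ⟨x, hx, q, hq, hdeg⟩ := hp.exists_path
  have hbq : b ∉ q.support := fun h => (hdeg b h).not_ge hb
  have hpx : T.dist x p < T.dist x b := by
    by_contra hle
    refine hbq (mem_support_of_dist_add_dist_eq hT hq ?_)
    rw [dist_eq_one_iff_adj.mpr hbp]
    have := hT.dist_eq_dist_add_one_of_adj x hbp
    omega
  obtain ⟨w, hwb, hw, -, hwx⟩ := exists_three_le_degree_between hT hbp hb' hpb' hx hpx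
  rw [add_comm, dist_comm (u := b)] at hwx
  have hmem := mem_support_of_dist_add_dist_eq hT (hq.concat hbq hbp.symm) hwx
  rw [Walk.support_concat, List.mem_append, List.mem_singleton] at hmem
  exact (hdeg w (hmem.resolve_right hwb)).not_ge hw

end Stem

section Optimal

/-- Conditions (C1) and (C2): among the spanning trees of `G` with the fewest leaves, `T` is one
whose reducible stem has the most vertices. -/
structure IsOptimalSpanningTree [Fintype V] (G T : SimpleGraph V) : Prop
    extends IsMinLeafSpanningTree G T where
  rstemCard_le : ∀ T' ≤ G, T'.IsTree → #(leafSet T') = #(leafSet T) → rstemCard T' ≤ rstemCard T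

variable [Fintype V] {G T : SimpleGraph V} {b b' p q v w : V}

/-- The graph obtained from the tree `T` by moving the leaf `v`, with neighbor `q`, onto the edge
`b p`. -/
noncomputable def relocateLeaf (T : SimpleGraph V) (v q b p : V) : SimpleGraph V :=
  edgeExchange T {s(v, q), s(b, p)} {s(v, b), s(v, p)}

theorem isAdmissibleExchange_relocateLeaf (hT : T.IsTree) (hv : T.degree v = 1) (hvq : T.Adj v q)
    (hbp : T.Adj b p) (hpv : T.dist v p < T.dist v b) (hvb : G.Adj v b) (hvp : G.Adj v p) :
    IsAdmissibleExchange G T {s(v, q), s(b, p)} {s(v, b), s(v, p)} := by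
  have hbp' := hbp.ne
  have hvb' := hvb.ne
  have hvp' := hvp.ne
  refine ⟨?_, ?_, ?_, ?_, fun x => ?_⟩
  · simp [Finset.insert_subset_iff, hvq, hbp]
  · simp [hvb, hvp]
  · grind
  · have hpq : (edgeExchange T {s(v, q), s(b, p)} {s(v, b), s(v, p)}).Reachable p q := by
      obtain ⟨r, hvr, hr⟩ := exists_adj_dist_eq_add_one hT.connected hvp'.symm
      obtain rfl := eq_of_adj_of_degree_eq_one hv hvq hvr
      have hbq := hT.dist_eq_dist_add_one_of_adj b hvq
      have := T.dist_comm (u := v) (v := b)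
      have := T.dist_comm (u := v) (v := p)
      refine reachable_edgeExchange_of_dist_add_dist_ne hT.connected p q ?_
      simpa only [Finset.mem_insert, Finset.mem_singleton, forall_eq_or_imp, forall_eq] using
        ⟨⟨v, by simp, by omega⟩, b, by simp, by omega⟩
    have hvb : (edgeExchange T {s(v, q), s(b, p)} {s(v, b), s(v, p)}).Adj v b :=
      edgeExchange_adj.mpr (by simp [hvb'])
    have hvp : (edgeExchange T {s(v, q), s(b, p)} {s(v, b), s(v, p)}).Adj v p :=
      edgeExchange_adj.mpr (by simp [hvp'])
    simpa only [Finset.mem_insert, Finset.mem_singleton, forall_eq_or_imp, forall_eq] using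
      ⟨⟨v, q, rfl, hvp.reachable.trans hpq⟩, b, p, rfl,
        hvb.symm.reachable.trans hvp.reachable⟩
  · simp only [Finset.filter_insert, Finset.filter_singleton, Sym2.mem_iff]
    grind

theorem degree_lt_three_of_relocateLeaf (hT : IsMinLeafSpanningTree G T) (hv : T.degree v = 1)
    (hvq : T.Adj v q) (hbp : T.Adj b p) (hpv : T.dist v p < T.dist v b) (hvb : G.Adj v b)
    (hvp : G.Adj v p) (hqb : q ≠ b) : T.degree q < 3 := by
  by_contra! hq
  have hle := IsAdmissibleExchange.card_filter_mem_le
    (isAdmissibleExchange_relocateLeaf hT.isTree hv hvq hbp hpv hvb hvp) hT hq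
  have := hvq.ne
  simp only [Finset.filter_insert, Finset.filter_singleton, Sym2.mem_iff] at hle
  grind

theorem degree_relocateLeaf_ne_one (hv : T.degree v = 1) (hvq : T.Adj v q) (hbp : T.Adj b p)
    (hp : ¬IsPendant T p) (hpq : p ≠ q) : (relocateLeaf T v q b p).degree p ≠ 1 := by
  intro h
  have hpv : p ≠ v := by rintro rfl; exact hp (.leaf hv)
  have hpos := T.degree_pos_iff_exists_adj p |>.mpr ⟨b, hbp.symm⟩
  have hone : T.degree p ≠ 1 := fun h => hp (.leaf h)
  obtain ⟨r, hpr, hrb⟩ := exists_adj_notMem_of_card_lt_degree (G := T) (s := {b}) (b := p)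
    (by rw [Finset.card_singleton]; omega)
  rw [Finset.mem_singleton] at hrb
  have hrv : r = v := eq_of_adj_of_degree_eq_one h
    (edgeExchange_adj.mpr (by simp [hpr, hpq, hpv, hrb, hbp.ne']))
    (edgeExchange_adj.mpr (by simp [hpv, Sym2.eq_swap]))
  exact hpq (eq_of_adj_of_degree_eq_one hv (hrv ▸ hpr.symm) hvq)

theorem IsPendant.of_degree_relocateLeaf_eq_one (hv : T.degree v = 1) (hvq : T.Adj v q)
    (hbp : T.Adj b p) (hb : 3 ≤ T.degree b) (hp : ¬IsPendant T p) (hq : IsPendant T q)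
    (hdeg : (relocateLeaf T v q b p).degree b - 2 = T.degree b - 2)
    (hw : (relocateLeaf T v q b p).degree w = 1) : IsPendant T w ∧ w ≠ v := by
  have hadj {x y : V} : (relocateLeaf T v q b p).Adj x y ↔ _ := edgeExchange_adj
  have hpv : p ≠ v := by rintro rfl; exact hp (.leaf hv)
  have hbv : b ≠ v := by rintro rfl; omega
  have hpq : p ≠ q := by rintro rfl; exact hp hq
  have hwv : w ≠ v := by
    rintro rfl
    exact hbp.ne (eq_of_adj_of_degree_eq_one hw (hadj.mpr (by simp [hbv.symm]))
      (hadj.mpr (by simp [hpv.symm])))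
  have hwb : w ≠ b := by rintro rfl; omega
  have hwp : w ≠ p := by
    rintro rfl
    exact degree_relocateLeaf_ne_one hv hvq hbp hp hpq hw
  obtain rfl | hwq := eq_or_ne w q
  · exact ⟨hq, hwv⟩
  have hiff (y : V) : (relocateLeaf T v q b p).Adj w y ↔ T.Adj w y := by
    simp [hadj, hwv, hwb, hwp, hwq]
  rw [degree_eq_one_iff_existsUnique_adj] at hw
  simp only [hiff] at hw
  exact ⟨.leaf (T.degree_eq_one_iff_existsUnique_adj.mpr hw), hwv⟩

theorem IsPendant.of_relocateLeaf (hv : T.degree v = 1) (hvq : T.Adj v q) (hbp : T.Adj b p)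
    (hb : 3 ≤ T.degree b) (hp : ¬IsPendant T p) (hq : IsPendant T q)
    (hdeg : ∀ x, (relocateLeaf T v q b p).degree x - 2 = T.degree x - 2)
    (h : IsPendant (relocateLeaf T v q b p) w) : IsPendant T w ∧ w ≠ v := by
  induction h with
  | leaf hw => exact IsPendant.of_degree_relocateLeaf_eq_one hv hvq hbp hb hp hq (hdeg b) hw
  | @step x y _ hxy hy ih =>
    obtain ⟨hx, hxv⟩ := ih
    have hxb : x ≠ b := by rintro rfl; exact hx.degree_lt_three.not_ge hb
    have hxp : x ≠ p := by rintro rfl; exact hp hx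
    have hxy' : T.Adj x y ∧ ¬(x = q ∧ y = v) := by
      simpa [relocateLeaf, edgeExchange_adj, hxv, hxb, hxp] using hxy
    have hyv : y ≠ v := by
      rintro rfl
      exact hxy'.2 ⟨eq_of_adj_of_degree_eq_one hv hxy'.1.symm hvq, rfl⟩
    exact ⟨hx.step hxy'.1 (by have := hdeg y; omega), hyv⟩

/-- Otherwise the leaf `v` could be moved onto the edge `b p`, adding it to the reducible stem. -/
theorem IsOptimalSpanningTree.not_adj_of_toward_branch (hT : IsOptimalSpanningTree G T)
    (hb : 3 ≤ T.degree b) (hb' : 3 ≤ T.degree b') (hbp : T.Adj b p)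
    (hpb' : T.dist b' p < T.dist b' b) (hv : T.degree v = 1) (hpv : T.dist v p < T.dist v b)
    (hvb : G.Adj v b) : ¬G.Adj v p := by
  intro hvp
  have : Nontrivial V := ⟨b, p, hbp.ne⟩
  have hp := not_isPendant_of_dist_lt hT.isTree hb hb' hbp hpb'
  obtain ⟨q, hvq⟩ := T.degree_pos_iff_exists_adj v |>.mp (by omega)
  have hqb : q ≠ b := by
    rintro rfl
    rw [dist_eq_one_iff_adj.mpr hvq, Nat.lt_one_iff, hT.isTree.connected.dist_eq_zero_iff] at hpv
    exact hvp.ne hpv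
  have hR := isAdmissibleExchange_relocateLeaf hT.isTree hv hvq hbp hpv hvb hvp
  have hmin := hT.toIsMinLeafSpanningTree
  have hq : IsPendant T q := IsPendant.step (.leaf hv) hvq
    (degree_lt_three_of_relocateLeaf hmin hv hvq hbp hpv hvb hvp hqb)
  have hpendant (w : V) := IsPendant.of_relocateLeaf (w := w) hv hvq hbp hb hp hq
    (hR.degree_sub_two_eq hmin)
  refine (hT.rstemCard_le _ (edgeExchange_le hT.le hR.mem_edgeSet) (hR.isTree hT.isTree)
    (hR.card_leafSet_eq hmin)).not_gt ?_
  rw [rstemCard_eq_ncard_not_isPendant, rstemCard_eq_ncard_not_isPendant]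
  refine Set.ncard_lt_ncard (Set.ssubset_iff_of_subset ?_ |>.mpr ⟨v, ?_, ?_⟩)
  · exact fun w hw h => hw (hpendant w h).1
  · exact fun h => (hpendant v h).2 rfl
  · exact fun h => h (.leaf hv)

end Optimal

/-! ### Oblique neighbors near a branch vertex -/

section Oblique

variable {G T : SimpleGraph V} {b b' c d p v v' x y z : V}

theorem isObliqueNbr_mk_iff : IsObliqueNbr G T s(x, y) v ↔
    T.dist v x < T.dist v y ∧ G.Adj v y ∨ T.dist v y < T.dist v x ∧ G.Adj v x := by
  simp only [IsObliqueNbr, Sym2.eq_iff]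
  grind

theorem reachable_edgeExchange_of_crossing_leaves {A : Finset (Sym2 V)} (hT : T.Connected)
    (hbb' : b ≠ b') (hd : T.dist v b' + T.dist b' b = T.dist v b)
    (hd' : T.dist v' b + T.dist b b' = T.dist v' b') (hc : T.dist v' b = T.dist v' c + 1)
    (hz : T.dist v b' = T.dist v z + 1) (hdb' : T.dist b' d = T.dist b' b + 1) :
    (edgeExchange T {s(b, c), s(b, d), s(b', z)} A).Reachable b b' ∧
      (edgeExchange T {s(b, c), s(b, d), s(b', z)} A).Reachable v' c ∧
      (edgeExchange T {s(b, c), s(b, d), s(b', z)} A).Reachable v z := by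
  have geodesic (x y : V) (hb : T.dist x b + T.dist b y ≠ T.dist x y ∨
      T.dist x c + T.dist c y ≠ T.dist x y ∧ T.dist x d + T.dist d y ≠ T.dist x y)
      (hb' : T.dist x b' + T.dist b' y ≠ T.dist x y ∨ T.dist x z + T.dist z y ≠ T.dist x y) :
      (edgeExchange T {s(b, c), s(b, d), s(b', z)} A).Reachable x y := by
    refine reachable_edgeExchange_of_dist_add_dist_ne hT x y ?_
    simp only [Finset.mem_insert, Finset.mem_singleton, forall_eq_or_imp, forall_eq,
      Sym2.mem_iff, exists_eq_or_imp, exists_eq_left]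
    tauto
  have hpos := hT.pos_dist_of_ne hbb'
  have htri : T.dist v' b' ≤ T.dist v' c + T.dist c b' := hT.dist_triangle
  have htri' : T.dist v b ≤ T.dist v z + T.dist z b := hT.dist_triangle
  have hcomm (x y : V) : T.dist x y = T.dist y x := dist_comm
  exact ⟨geodesic b b' (by grind) (by grind), geodesic v' c (by grind) (by grind),
    geodesic v z (by grind) (by grind)⟩

variable [Fintype V]

theorem IsMinLeafSpanningTree.adj_of_isObliqueNbr (hT : IsMinLeafSpanningTree G T)
    (hb : 3 ≤ T.degree b) (hbp : T.Adj b p) (hv : T.degree v = 1)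
    (h : IsObliqueNbr G T s(b, p) v) : T.dist v p < T.dist v b ∧ G.Adj v b := by
  obtain ⟨hlt, hvp⟩ | h := isObliqueNbr_mk_iff.mp h
  · refine absurd hvp (hT.not_adj_of_separated hb hbp hv hlt (Or.inl rfl) ?_)
    rw [dist_self]
    exact hT.isTree.connected.pos_dist_of_ne hbp.ne'
  · exact h

theorem IsOptimalSpanningTree.adj_of_adj_of_adj (hT : IsOptimalSpanningTree G T)
    (hK : K14Free G) (hb : 3 ≤ T.degree b) (hb' : 3 ≤ T.degree b') (hbp : T.Adj b p)
    (hpb' : T.dist b' p < T.dist b' b) (hv : T.degree v = 1) (hpv : T.dist v p < T.dist v b)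
    (hvb : G.Adj v b) (hbc : T.Adj b c) (hbd : T.Adj b d) (hcp : c ≠ p) (hdp : d ≠ p)
    (hcd : c ≠ d) : G.Adj c d := by
  have hmin := hT.toIsMinLeafSpanningTree
  by_contra hGcd
  have hvp : v ≠ p := by
    rintro rfl
    exact not_isPendant_of_dist_lt hT.isTree hb hb' hbp hpb' (.leaf hv)
  have hGvp := hT.not_adj_of_toward_branch hb hb' hbp hpb' hv hpv hvb
  have away {r : V} (hbr : T.Adj b r) (hrp : r ≠ p) : v ≠ r ∧ ¬G.Adj v r ∧ ¬G.Adj r p := by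
    have hvr := dist_eq_add_one_of_adj_of_ne hT.isTree hbp hpv hbr hrp
    refine ⟨?_, fun h => ?_, hmin.not_adj_of_adj_of_dist_lt hb hbp hbr hrp hv hpv hvb⟩
    · rintro rfl
      simp at hvr
    · have := (hmin.adj_of_isObliqueNbr hb hbr hv
        (isObliqueNbr_mk_iff.mpr (Or.inl ⟨by omega, h⟩))).1
      omega
  obtain ⟨hvc, hGvc, hGcp⟩ := away hbc hcp
  obtain ⟨hvd, hGvd, hGdp⟩ := away hbd hdp
  exact hK ⟨b, v, p, c, d, hvp, hvc, hvd, hcp.symm, hdp.symm, hcd, hvb.symm, hT.le hbp, hT.le hbc,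
    hT.le hbd, hGvp, hGvc, hGvd, fun h => hGcp h.symm, fun h => hGdp h.symm, hGcd⟩

theorem isAdmissibleExchange_of_crossing_leaves (hT : T.IsTree) (hbb' : b ≠ b')
    (hv : T.degree v = 1) (hv' : T.degree v' = 1) (hvb : G.Adj v b) (hvb' : G.Adj v' b')
    (hd : T.dist v b' + T.dist b' b = T.dist v b)
    (hd' : T.dist v' b + T.dist b b' = T.dist v' b') (hbc : T.Adj b c)
    (hc : T.dist v' b = T.dist v' c + 1) (hbz : T.Adj b' z) (hz : T.dist v b' = T.dist v z + 1)
    (hbd : T.Adj b d) (hdb' : T.dist b' d = T.dist b' b + 1) (hcd : G.Adj c d) :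
    IsAdmissibleExchange G T {s(b, c), s(b, d), s(b', z)} {s(c, d), s(v', b'), s(v, b)} := by
  have hpos := hT.connected.pos_dist_of_ne hbb'
  have := T.dist_comm (u := b) (v := b')
  have hvv' : v ≠ v' := by rintro rfl; omega
  have hbc' := hbc.ne
  have hbd' := hbd.ne
  have hcd' := hcd.ne
  have hbz' : b ≠ z := by rintro rfl; omega
  refine ⟨?_, ?_, ?_, ?_, fun x => ?_⟩
  · simp [Finset.insert_subset_iff, hbc, hbd, hbz]
  · simp [hcd, hvb, hvb']
  · refine Finset.card_le_three.trans_eq (Finset.card_eq_three.mpr ⟨_, _, _, ?_, ?_, ?_, rfl⟩).symm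
    · simpa using ⟨hcd', fun h _ => hbd' h⟩
    · simp [hbb', hbz']
    · simp [hbb', hbz']
  · set A : Finset (Sym2 V) := {s(c, d), s(v', b'), s(v, b)}
    obtain ⟨hbb, hv'c, hvz⟩ := reachable_edgeExchange_of_crossing_leaves (A := A) hT.connected
      hbb' hd hd' hc hz hdb'
    have hadj {x y : V} (hxy : x ≠ y) (h : s(x, y) ∈ A) :
        (edgeExchange T {s(b, c), s(b, d), s(b', z)} A).Reachable x y :=
      (edgeExchange_adj.mpr (Or.inr ⟨h, hxy⟩)).reachable
    have hbc := hbb.trans ((hadj hvb'.ne (by simp [A])).symm.trans hv'c)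
    have hbd := hbc.trans (hadj hcd' (by simp [A]))
    have hb'z := hbb.symm.trans ((hadj hvb.ne (by simp [A])).symm.trans hvz)
    simpa only [Finset.mem_insert, Finset.mem_singleton, forall_eq_or_imp, forall_eq] using
      ⟨⟨b, c, rfl, hbc⟩, ⟨b, d, rfl, hbd⟩, b', z, rfl, hb'z⟩
  · simp only [Finset.filter_insert, Finset.filter_singleton, Sym2.mem_iff]
    grind

/-- Otherwise both leaves could be attached to the far branch vertex and two neighbors of `b`
joined, so that `b` loses an edge. -/
theorem IsOptimalSpanningTree.not_adj_of_crossing_leaves (hT : IsOptimalSpanningTree G T)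
    (hK : K14Free G) (hb : 3 ≤ T.degree b) (hb' : 3 ≤ T.degree b') (hbb' : b ≠ b')
    (hv : T.degree v = 1) (hv' : T.degree v' = 1)
    (hd : T.dist v b' + T.dist b' b = T.dist v b)
    (hd' : T.dist v' b + T.dist b b' = T.dist v' b') (hvb : G.Adj v b) : ¬G.Adj v' b' := by
  intro hvb'
  have hmin := hT.toIsMinLeafSpanningTree
  have hconn := hT.isTree.connected
  have hv'b : v' ≠ b := by rintro rfl; omega
  have hvb'' : v ≠ b' := by rintro rfl; omega
  obtain ⟨p, hbp, hp⟩ := exists_adj_dist_eq_add_one hconn hbb'.symm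
  obtain ⟨c, hbc, hc⟩ := exists_adj_dist_eq_add_one hconn hv'b
  obtain ⟨z, hbz, hz⟩ := exists_adj_dist_eq_add_one hconn hvb''
  have hpv : T.dist v p < T.dist v b := by
    have := hconn.dist_triangle (u := v) (v := b') (w := p)
    omega
  have hcp : c ≠ p :=
    ne_of_dist_eq_add_one hconn (by rw [dist_comm (u := b'), hd', dist_comm]) hc hp
  obtain ⟨d, hbd, hds⟩ := exists_adj_notMem_of_card_lt_degree (s := {p, c})
    (Finset.card_le_two.trans_lt hb)
  simp only [Finset.mem_insert, Finset.mem_singleton, not_or] at hds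
  have hdb' := dist_eq_add_one_of_adj_of_ne (x := b') hT.isTree hbp (by omega) hbd hds.1
  have hcd := hT.adj_of_adj_of_adj hK hb hb' hbp (by omega) hv hpv hvb hbc hbd hcp hds.1
    (Ne.symm hds.2)
  have hR := isAdmissibleExchange_of_crossing_leaves hT.isTree hbb' hv hv' hvb hvb' hd hd' hbc hc
    hbz hz hbd hdb' hcd
  have hle := hR.card_filter_mem_le hmin hb
  have hbz' : b ≠ z := by
    rintro rfl
    omega
  simp [Finset.filter_insert, Finset.filter_singleton, hbb', hbz', hv'b.symm, hbc.ne,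
    hbd.ne, Ne.symm hds.2] at hle

end Oblique

section Consecutive

/-- The branch vertices `b` and `b'` of the tree `T` are joined by a path of `T` with no other
branch vertex. -/
structure AreConsecutiveBranchVertices [Fintype V] (T : SimpleGraph V) (b b' : V) : Prop where
  ne : b ≠ b'
  left : 3 ≤ T.degree b
  right : 3 ≤ T.degree b'
  eq_or_eq : ∀ w, 3 ≤ T.degree w → T.dist b w + T.dist w b' = T.dist b b' → w = b ∨ w = b'

variable [Fintype V] {G T : SimpleGraph V} {b b' p v : V}

namespace AreConsecutiveBranchVertices

theorem symm (h : AreConsecutiveBranchVertices T b b') : AreConsecutiveBranchVertices T b' b where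
  ne := h.ne.symm
  left := h.right
  right := h.left
  eq_or_eq w hw hdist := (h.eq_or_eq w hw (by
    rwa [add_comm, dist_comm (u := w), dist_comm (u := b) (v := w), dist_comm (u := b)])).symm

theorem dist_add_dist_eq (h : AreConsecutiveBranchVertices T b b') (hT : T.IsTree)
    (hbp : T.Adj b p) (hpb' : T.dist b' p < T.dist b' b) (hv : T.degree v = 1)
    (hpv : T.dist v p < T.dist v b) : T.dist v b' + T.dist b' b = T.dist v b := by
  obtain ⟨w, hwb, hw, hwb', hwv⟩ := exists_three_le_degree_between hT hbp h.right hpb' hv hpv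
  obtain rfl := (h.eq_or_eq w hw (by
    rwa [dist_comm (u := w), dist_comm (u := b) (v := b')])).resolve_left hwb
  rwa [add_comm, dist_comm (u := w)]

theorem exists_adj_forall_not_isObliqueNbr (h : AreConsecutiveBranchVertices T b b')
    (hT : IsOptimalSpanningTree G T) (hK : K14Free G) :
    ∃ x y, T.Adj x y ∧ T.dist b x + T.dist b' y < T.dist b b' ∧
      ∀ v, T.degree v = 1 → ¬IsObliqueNbr G T s(x, y) v := by
  have hmin := hT.toIsMinLeafSpanningTree
  obtain ⟨p, hbp, hp⟩ := exists_adj_dist_eq_add_one hT.isTree.connected h.ne.symm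
  obtain ⟨q, hbq, hq⟩ := exists_adj_dist_eq_add_one hT.isTree.connected h.ne
  have hcomm : T.dist b b' = T.dist b' b := dist_comm
  by_cases hall : ∀ v, T.degree v = 1 → ¬IsObliqueNbr G T s(b, p) v
  · exact ⟨b, p, hbp, by rw [dist_self]; omega, hall⟩
  push Not at hall
  obtain ⟨v, hv, hvp⟩ := hall
  obtain ⟨hpv, hvb⟩ := hmin.adj_of_isObliqueNbr h.left hbp hv hvp
  refine ⟨q, b', hbq.symm, by rw [dist_self]; omega, fun v' hv' hv'q => ?_⟩
  rw [Sym2.eq_swap] at hv'q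
  obtain ⟨hqv', hv'b'⟩ := hmin.adj_of_isObliqueNbr h.right hbq hv' hv'q
  exact hT.not_adj_of_crossing_leaves hK h.left h.right h.ne hv hv'
    (h.dist_add_dist_eq hT.isTree hbp (by omega) hv hpv)
    (h.symm.dist_add_dist_eq hT.isTree hbq (by omega) hv' hqv') hvb hv'b'

end AreConsecutiveBranchVertices

theorem exists_areConsecutiveBranchVertices (hT : T.Connected) (hb : 3 ≤ T.degree b)
    (hb' : 3 ≤ T.degree b') (hbb' : b ≠ b') :
    ∃ w, AreConsecutiveBranchVertices T b w ∧ T.dist b w + T.dist w b' = T.dist b b' := by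
  let I : Finset V := {w | w ≠ b ∧ 3 ≤ T.degree w ∧ T.dist b w + T.dist w b' = T.dist b b'}
  have mem_I {w : V} : w ∈ I ↔
      w ≠ b ∧ 3 ≤ T.degree w ∧ T.dist b w + T.dist w b' = T.dist b b' := by simp [I]
  obtain ⟨w, hwI, hmin⟩ := I.exists_min_image (T.dist b)
    ⟨b', mem_I.mpr ⟨hbb'.symm, hb', by rw [dist_self, add_zero]⟩⟩
  obtain ⟨hwb, hw, hdist⟩ := mem_I.mp hwI
  refine ⟨w, ⟨hwb.symm, hb, hw, fun u hu hbu => or_iff_not_imp_left.mpr fun hub => ?_⟩, hdist⟩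
  have htri : T.dist u b' ≤ T.dist u w + T.dist w b' := hT.dist_triangle
  have htri' : T.dist b b' ≤ T.dist b u + T.dist u b' := hT.dist_triangle
  have := hmin u (mem_I.mpr ⟨hub, hu, by omega⟩)
  exact hT.dist_eq_zero_iff.mp (by omega)

theorem IsOptimalSpanningTree.exists_adj_forall_not_isObliqueNbr (hT : IsOptimalSpanningTree G T)
    (hK : K14Free G) (hb : 3 ≤ T.degree b) (hb' : 3 ≤ T.degree b') (hbb' : b ≠ b') :
    ∃ x y, T.Adj x y ∧ T.dist b x + T.dist b' y < T.dist b b' ∧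
      ∀ v, T.degree v = 1 → ¬IsObliqueNbr G T s(x, y) v := by
  obtain ⟨w, hbw, hw⟩ := exists_areConsecutiveBranchVertices hT.isTree.connected hb hb' hbb'
  obtain ⟨x, y, hxy, hdist, hfree⟩ := hbw.exists_adj_forall_not_isObliqueNbr hT hK
  refine ⟨x, y, hxy, ?_, hfree⟩
  have htri : T.dist b' y ≤ T.dist b' w + T.dist w y := hT.isTree.connected.dist_triangle
  rw [dist_comm (u := b') (v := w)] at htri
  omega

end Consecutive

/-! ### Counting the edges without oblique neighbors -/

section Counting

variable {G T : SimpleGraph V} {a b x y : V}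

theorem reachable_deleteEdges_singleton_or (h : G.Reachable x y) :
    (G.deleteEdges {s(a, b)}).Reachable x y ∨
      (G.deleteEdges {s(a, b)}).Reachable x a ∧ (G.deleteEdges {s(a, b)}).Reachable b y ∨
      (G.deleteEdges {s(a, b)}).Reachable x b ∧ (G.deleteEdges {s(a, b)}).Reachable a y := by
  obtain ⟨q⟩ := h
  induction q with
  | nil => exact Or.inl (Reachable.refl _)
  | @cons x u y hxu _ ih =>
    by_cases he : s(x, u) = s(a, b)
    · obtain ⟨rfl, rfl⟩ | ⟨rfl, rfl⟩ := Sym2.eq_iff.mp he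
      · obtain h | ⟨hux, huy⟩ | ⟨-, hxy⟩ := ih
        exacts [Or.inr (Or.inl ⟨.refl _, h⟩), Or.inl (hux.symm.trans huy), Or.inl hxy]
      · obtain h | ⟨-, hxy⟩ | ⟨hux, huy⟩ := ih
        exacts [Or.inr (Or.inr ⟨.refl _, h⟩), Or.inl hxy, Or.inl (hux.symm.trans huy)]
    · have hxu : (G.deleteEdges {s(a, b)}).Reachable x u :=
        Adj.reachable (deleteEdges_adj.mpr ⟨hxu, he⟩)
      exact ih.imp hxu.trans (Or.imp (And.imp_left hxu.trans) (And.imp_left hxu.trans))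

theorem card_le_card_add_one_of_pairwise_not_reachable (hG : G.Preconnected)
    {F : Finset (Sym2 V)} {X : Finset V}
    (hX : (X : Set V).Pairwise fun x y => ¬(G.deleteEdges F).Reachable x y) : #X ≤ #F + 1 := by
  induction F using Finset.induction_on generalizing X with
  | empty =>
    rw [Finset.coe_empty, deleteEdges_empty] at hX
    exact Finset.card_le_one.mpr fun x hx y hy => by_contra fun hxy => hX hx hy hxy (hG x y)
  | insert e F he ih =>
    induction e using Sym2.ind with | _ a b =>
    rw [Finset.coe_insert, Set.insert_eq, Set.union_comm, ← deleteEdges_deleteEdges] at hX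
    set H := (G.deleteEdges F).deleteEdges {s(a, b)}
    have hfar : #{x ∈ X | ¬H.Reachable a x} ≤ #F + 1 := by
      refine ih fun x hx y hy hxy hreach => ?_
      simp only [Finset.coe_filter, Set.mem_ofPred_eq] at hx hy
      obtain h | ⟨h, -⟩ | ⟨-, h⟩ := reachable_deleteEdges_singleton_or (a := a) (b := b) hreach
      exacts [hX hx.1 hy.1 hxy h, hx.2 h.symm, hy.2 h]
    have hnear : #{x ∈ X | H.Reachable a x} ≤ 1 := by
      refine Finset.card_le_one.mpr fun x hx y hy => by_contra fun hxy => ?_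
      rw [Finset.mem_filter] at hx hy
      exact hX hx.1 hy.1 hxy (hx.2.symm.trans hy.2)
    have hsplit : #{x ∈ X | H.Reachable a x} + #{x ∈ X | ¬H.Reachable a x} = #X :=
      Finset.card_filter_add_card_filter_not _
    rw [Finset.card_insert_of_notMem he]
    omega

variable [Fintype V]

/-- The edges of `T` with no oblique neighbor in `S`. -/
noncomputable def freeEdges (G T : SimpleGraph V) (S : Finset V) : Finset (Sym2 V) :=
  {e ∈ T.edgeFinset | ∀ v ∈ S, ¬IsObliqueNbr G T e v}

variable {S : Finset V}

theorem mem_freeEdges {e : Sym2 V} :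
    e ∈ freeEdges G T S ↔ e ∈ T.edgeSet ∧ ∀ v ∈ S, ¬IsObliqueNbr G T e v := by
  simp [freeEdges]

namespace IsOptimalSpanningTree

theorem not_reachable_deleteEdges_of_leaf (hT : IsOptimalSpanningTree G T)
    (hS : S ⊆ leafSet T) (hb : 3 ≤ T.degree b) (hx : T.degree x = 1) (hxS : x ∉ S) (hxy : x ≠ y) :
    ¬(T.deleteEdges (freeEdges G T S)).Reachable x y := by
  have hconn := hT.isTree.connected
  obtain ⟨q, hxq, hq⟩ := exists_adj_dist_eq_add_one hconn hxy.symm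
  refine not_reachable_deleteEdges_of_dist_add_dist_lt hT.isTree hxq
    (Finset.mem_coe.mpr (mem_freeEdges.mpr ⟨hxq, fun v hvS hv => ?_⟩))
    (by rw [dist_self, dist_comm (u := x)]; omega)
  have hvx : v ≠ x := ne_of_mem_of_not_mem hvS hxS
  obtain ⟨r, hxr, hr⟩ := exists_adj_dist_eq_add_one hconn hvx
  obtain rfl := eq_of_adj_of_degree_eq_one hx hxq hxr
  obtain ⟨hlt, -⟩ | ⟨-, hadj⟩ := isObliqueNbr_mk_iff.mp hv
  · omega
  · exact hT.not_adj_of_degree_eq_one hb (Finset.mem_filter.mp (hS hvS)).2 hx hadj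

theorem not_reachable_deleteEdges_of_branch (hT : IsOptimalSpanningTree G T) (hK : K14Free G)
    (hS : S ⊆ leafSet T) (hx : 3 ≤ T.degree x) (hy : 3 ≤ T.degree y) (hxy : x ≠ y) :
    ¬(T.deleteEdges (freeEdges G T S)).Reachable x y := by
  obtain ⟨a, c, hac, hdist, hfree⟩ := hT.exists_adj_forall_not_isObliqueNbr hK hx hy hxy
  exact not_reachable_deleteEdges_of_dist_add_dist_lt hT.isTree hac (Finset.mem_coe.mpr
    (mem_freeEdges.mpr ⟨hac, fun v hv => hfree v (Finset.mem_filter.mp (hS hv)).2⟩)) hdist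

theorem card_leafSet_add_card_branchSet_le (hT : IsOptimalSpanningTree G T) (hK : K14Free G)
    (hS : S ⊆ leafSet T) (hb : 3 ≤ T.degree b) :
    #(leafSet T) + #(branchSet T) ≤ #S + #(freeEdges G T S) + 1 := by
  have hdisj : Disjoint (leafSet T \ S) (branchSet T) := by
    simp only [Finset.disjoint_left, leafSet, branchSet, Finset.mem_sdiff, Finset.mem_filter]
    omega
  have hcard : #((leafSet T \ S) ∪ branchSet T) ≤ #(freeEdges G T S) + 1 := by
    refine card_le_card_add_one_of_pairwise_not_reachable hT.isTree.connected.preconnected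
      fun x hx y hy hxy => ?_
    simp only [Finset.coe_union, Set.mem_union, Finset.mem_coe, Finset.mem_sdiff, leafSet,
      branchSet, Finset.mem_filter, Finset.mem_univ, true_and] at hx hy
    obtain ⟨hx, hxS⟩ | hx := hx
    · exact hT.not_reachable_deleteEdges_of_leaf hS hb hx hxS hxy
    obtain ⟨hy, hyS⟩ | hy := hy
    · exact fun h => hT.not_reachable_deleteEdges_of_leaf hS hb hy hyS hxy.symm h.symm
    · exact hT.not_reachable_deleteEdges_of_branch hK hS hx hy hxy
  rw [Finset.card_union_of_disjoint hdisj, Finset.card_sdiff_of_subset hS] at hcard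
  have := Finset.card_le_card hS
  omega

end IsOptimalSpanningTree

end Counting

theorem stmt15_general [Fintype V] {k m : ℕ} (hm : m ≤ k + 1) {G T : SimpleGraph V}
    (hK : K14Free G) (hT : IsOptimalSpanningTree G T)
    (hLB : m + k + 2 < #(leafSet T) + #(branchSet T)) :
    ∃ S : Finset V, IsIndepFinset G S ∧ #S = m + 2 ∧
      k ≤ {e | e ∈ T.edgeSet ∧ ∀ v ∈ S, ¬IsObliqueNbr G T e v}.ncard := by
  obtain _ | _ := subsingleton_or_nontrivial V
  · simp [leafSet, branchSet] at hLB
  have hBL : #(branchSet T) + 2 ≤ #(leafSet T) := by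
    rw [card_leafSet_eq_two_add_sum hT.isTree, add_comm]
    exact Nat.add_le_add_left card_branchSet_le_sum 2
  obtain ⟨b, hb⟩ := exists_three_le_degree_of_two_lt_card_leafSet hT.isTree (by omega)
  obtain ⟨S, hS, hcard⟩ := Finset.exists_subset_card_eq (s := leafSet T) (n := m + 2) (by omega)
  refine ⟨S, fun u hu v hv _ => hT.not_adj_of_degree_eq_one hb (Finset.mem_filter.mp (hS hu)).2
    (Finset.mem_filter.mp (hS hv)).2, hcard, ?_⟩
  have hfree : {e | e ∈ T.edgeSet ∧ ∀ v ∈ S, ¬IsObliqueNbr G T e v} = ↑(freeEdges G T S) :=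
    Set.ext fun e => mem_freeEdges.symm
  have := hT.card_leafSet_add_card_branchSet_le hK hS hb
  rw [hfree, Set.ncard_coe_finset]
  omega

/-- Let `m ≤ k+1`, let `G` be a connected `K_{1,4}`-free graph having no
spanning tree `T'` with `|L(T')| + |B(T')| ≤ m+k+2`, and let `T` be a spanning tree of `G`
chosen so that (C1) `|L(T)|` is minimum and (C2) `|V(R_Stem(T))|` is maximum subject to
(C1). Then there is an independent set `S` of `G` with `|S| = m+2` such that at least `k`
distinct edges of `T` have no oblique neighbor in `S` with respect to `T`. -/
theorem stmt15 {V : Type*} [Fintype V] (k m : ℕ) (hm : m ≤ k + 1)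
    (G : SimpleGraph V) (hG : G.Connected) (hK : K14Free G)
    (hno : ¬ ∃ T' : SimpleGraph V, T' ≤ G ∧ T'.IsTree ∧
      (leafSet T').card + (branchSet T').card ≤ m + k + 2)
    (T : SimpleGraph V) (hT : T ≤ G) (hTree : T.IsTree)
    (hC1 : ∀ T' : SimpleGraph V, T' ≤ G → T'.IsTree →
      (leafSet T).card ≤ (leafSet T').card)
    (hC2 : ∀ T' : SimpleGraph V, T' ≤ G → T'.IsTree →
      (leafSet T').card = (leafSet T).card → rstemCard T' ≤ rstemCard T) :
    ∃ S : Finset V, IsIndepFinset G S ∧ S.card = m + 2 ∧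
      k ≤ {e | e ∈ T.edgeSet ∧ ∀ v ∈ S, ¬ IsObliqueNbr G T e v}.ncard :=
  stmt15_general hm hK ⟨⟨hT, hTree, hC1⟩, hC2⟩
    (not_le.mp fun hle => hno ⟨T, hT, hTree, hle⟩)
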